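/- Suppose the target density satisfies π ≤ M for some constant M ∈ (0, +∞) and that inf_{θ ∈ Θ} A(θ) = 0. Then the Metropolis–Hastings kernel P is not Wasserstein geometrically ergodic with respect to the metric induced by any norm ‖·‖ on ℝ^d. -/

import Mathlib

/-!
If `P(θ, ·)` rejects with probability `1 - A(θ)`, then `P^t(θ, ·)` has an atom of mass at least
`m = (1 - A(θ))^t` at `θ`. The target has density at most `M`, so it puts mass at most
`M (2r)^d` on the sup-norm ball of radius `r` around `θ`; any coupling must therefore move mass at
least `m - M (2r)^d` from `θ` over a distance at least `r`. Taking `r` a small multiple of `m`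
gives `W(P^t(θ, ·), Π) ≥ C m²` with `C > 0` independent of `θ` and `t` (the optimal exponent is
`1 + 1/d`, but `2` is enough). All norms on `ℝ^d` dominate a multiple of the sup norm, so this
holds for any of them. A geometric rate `ε` thus forces `(1 - A(θ))² ≤ ε` for every `θ`, which
fails when `A(θ) < (1 - ε) / 2`.
-/

open MeasureTheory ENNReal Filter Matrix
open scoped BigOperators NNReal

noncomputable section

/-- The set of couplings of two measures. -/
def couplings {E : Type*} [MeasurableSpace E] (μ ν : Measure E) : Set (Measure (E × E)) :=
  {ξ | ξ.map Prod.fst = μ ∧ ξ.map Prod.snd = ν}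

/-- The `L₁` Wasserstein (transportation) distance with cost `ρ`, valued in `ℝ≥0∞`:
`W_ρ(μ, ν) = inf over couplings ξ of ∫ ρ dξ`. -/
def wassersteinDist {E : Type*} [MeasurableSpace E] (ρ : E → E → ℝ)
    (μ ν : Measure E) : ℝ≥0∞ :=
  ⨅ ξ ∈ couplings μ ν, ∫⁻ p, ENNReal.ofReal (ρ p.1 p.2) ∂ξ

/-- `ρ` is a lower semicontinuous metric on the set `Θ`. -/
def IsLSCMetricOn {E : Type*} [TopologicalSpace E] (Θ : Set E) (ρ : E → E → ℝ) : Prop :=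
  LowerSemicontinuousOn (fun p : E × E => ρ p.1 p.2) (Θ ×ˢ Θ) ∧
  (∀ x ∈ Θ, ∀ y ∈ Θ, 0 ≤ ρ x y) ∧ (∀ x ∈ Θ, ρ x x = 0) ∧
  (∀ x ∈ Θ, ∀ y ∈ Θ, ρ x y = 0 → x = y) ∧
  (∀ x ∈ Θ, ∀ y ∈ Θ, ρ x y = ρ y x) ∧
  (∀ x ∈ Θ, ∀ y ∈ Θ, ∀ z ∈ Θ, ρ x z ≤ ρ x y + ρ y z)

/-- Metropolis–Hastings acceptance ratio for target density `π` and proposal density `q`. -/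
def mhAccept {E : Type*} (π : E → ℝ) (q : E → E → ℝ) (θ θ' : E) : ℝ :=
  if 0 < π θ * q θ θ' then min (π θ' * q θ' θ / (π θ * q θ θ')) 1 else 1

/-- Metropolis–Hastings overall acceptance probability `A(θ)`. -/
def mhAcceptProb {E : Type*} [MeasureSpace E] (Θ : Set E) (π : E → ℝ) (q : E → E → ℝ)
    (θ : E) : ℝ :=
  ∫ θ' in Θ, mhAccept π q θ θ' * q θ θ'

/-- The Metropolis–Hastings Markov kernel
`P(θ, B) = ∫_B a(θ,θ') q(θ,θ') dθ' + δ_θ(B) (1 - A(θ))`. -/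
def mhKernel {E : Type*} [MeasureSpace E] (Θ : Set E) (π : E → ℝ) (q : E → E → ℝ)
    (θ : E) : Measure E :=
  (volume.restrict Θ).withDensity (fun θ' => ENNReal.ofReal (mhAccept π q θ θ' * q θ θ')) +
    (ENNReal.ofReal (1 - mhAcceptProb Θ π q θ)) • Measure.dirac θ

/-- `t`-fold iterate `P^t` of a Markov kernel, with `P^0(θ, ·) = δ_θ`. -/
def kernelIter {E : Type*} [MeasurableSpace E] (P : E → Measure E) : ℕ → E → Measure E
  | 0, θ => Measure.dirac θ
  | (t + 1), θ => (P θ).bind (kernelIter P t)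

end

/-- A norm on `ℝ^d`, given by its axioms, dominates a positive multiple of the sup norm: it is
Lipschitz, hence attains a positive minimum on the unit sphere. -/
lemma exists_pos_mul_norm_le {d : ℕ} (N : (Fin d → ℝ) → ℝ)
    (hNadd : ∀ x y, N (x + y) ≤ N x + N y)
    (hNsmul : ∀ (c : ℝ) x, N (c • x) = |c| * N x)
    (hNzero : ∀ x, N x = 0 ↔ x = 0) :
    ∃ c : ℝ, 0 < c ∧ ∀ x, c * ‖x‖ ≤ N x := by
  have h0 : N 0 = 0 := (hNzero 0).2 rfl
  have hneg : ∀ x, N (-x) = N x := fun x => by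
    have := hNsmul (-1) x
    simpa using this
  have hnn : ∀ x, 0 ≤ N x := fun x => by
    have h := hNadd x (-x)
    rw [add_neg_cancel, h0, hneg] at h
    linarith
  have hsum : ∀ (s : Finset (Fin d)) (f : Fin d → (Fin d → ℝ)),
      N (∑ i ∈ s, f i) ≤ ∑ i ∈ s, N (f i) := fun s f =>
    Finset.le_sum_of_subadditive N h0.le hNadd s f
  set K : ℝ := ∑ i : Fin d, N (Pi.single i 1) with hK
  have hbound : ∀ x, N x ≤ K * ‖x‖ := fun x => by
    have hx : x = ∑ i : Fin d, x i • (Pi.single i (1 : ℝ) : Fin d → ℝ) := by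
      ext j
      simp [Finset.sum_apply, Pi.single_apply]
    calc N x = N (∑ i : Fin d, x i • (Pi.single i (1 : ℝ) : Fin d → ℝ)) := by rw [← hx]
      _ ≤ ∑ i : Fin d, N (x i • (Pi.single i (1 : ℝ) : Fin d → ℝ)) := hsum _ _
      _ ≤ ∑ i : Fin d, N (Pi.single i 1) * ‖x‖ := by
          refine Finset.sum_le_sum fun i _ => ?_
          rw [hNsmul, mul_comm]
          exact mul_le_mul_of_nonneg_left (norm_le_pi_norm x i) (hnn _)
      _ = K * ‖x‖ := by rw [hK, Finset.sum_mul]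
  have hK0 : 0 ≤ K := Finset.sum_nonneg fun i _ => hnn _
  have hcont : Continuous N := by
    refine (LipschitzWith.of_le_add_mul K.toNNReal fun x y => ?_).continuous
    have h1 := hNadd y (x - y)
    have h2 := hbound (x - y)
    rw [add_sub_cancel] at h1
    rw [Real.coe_toNNReal K hK0, dist_eq_norm]
    linarith
  rcases (Metric.sphere (0 : Fin d → ℝ) 1).eq_empty_or_nonempty with he | hne
  · -- An empty unit sphere means the space is trivial.
    refine ⟨1, one_pos, fun x => ?_⟩
    have hx : x = 0 := by
      by_contra hx
      have : (‖x‖⁻¹ • x) ∈ Metric.sphere (0 : Fin d → ℝ) 1 := by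
        simp [norm_smul, hx]
      rw [he] at this
      exact this
    simp [hx, h0]
  · obtain ⟨z, hz, hmin⟩ := (isCompact_sphere (0 : Fin d → ℝ) 1).exists_isMinOn hne
      hcont.continuousOn
    have hz0 : z ≠ 0 := by
      rintro rfl
      simp at hz
    refine ⟨N z, lt_of_le_of_ne (hnn z) fun h => hz0 ((hNzero z).1 h.symm), fun x => ?_⟩
    by_cases hx : x = 0
    · simp [hx, h0]
    have hxp : 0 < ‖x‖ := norm_pos_iff.2 hx
    have hmem : (‖x‖⁻¹ • x) ∈ Metric.sphere (0 : Fin d → ℝ) 1 := by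
      simp [norm_smul, hx]
    have h : N z ≤ N (‖x‖⁻¹ • x) := hmin hmem
    rw [hNsmul, abs_of_pos (inv_pos.2 hxp), inv_mul_eq_div, le_div_iff₀ hxp] at h
    exact h

lemma mhAccept_nonneg {E : Type*} {π : E → ℝ} {q : E → E → ℝ} (hπ0 : ∀ θ, 0 ≤ π θ)
    (hq0 : ∀ θ θ', 0 ≤ q θ θ') (θ θ' : E) : 0 ≤ mhAccept π q θ θ' := by
  unfold mhAccept
  split_ifs with h
  · exact le_min (div_nonneg (mul_nonneg (hπ0 _) (hq0 _ _)) h.le) zero_le_one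
  · exact zero_le_one

lemma measurable_mhAccept_mul {E : Type*} [MeasurableSpace E] {π : E → ℝ} {q : E → E → ℝ}
    (hπ : Measurable π) (hq : Measurable (Function.uncurry q)) :
    Measurable fun p : E × E => mhAccept π q p.1 p.2 * q p.1 p.2 := by
  have hq1 : Measurable fun p : E × E => q p.1 p.2 := hq
  have hq2 : Measurable fun p : E × E => q p.2 p.1 := hq.comp measurable_swap
  have h1 : Measurable fun p : E × E => π p.1 := hπ.comp measurable_fst
  have h2 : Measurable fun p : E × E => π p.2 := hπ.comp measurable_snd
  refine Measurable.mul ?_ hq1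
  unfold mhAccept
  exact Measurable.ite (measurableSet_lt measurable_const (h1.mul hq1))
    (((h2.mul hq2).div (h1.mul hq1)).min measurable_const) measurable_const

lemma measurable_mhKernel {d : ℕ} {Θ : Set (Fin d → ℝ)}
    {π : (Fin d → ℝ) → ℝ} {q : (Fin d → ℝ) → (Fin d → ℝ) → ℝ}
    (hπ : Measurable π) (hq : Measurable (Function.uncurry q)) :
    Measurable (mhKernel Θ π q) := by
  have hm := measurable_mhAccept_mul hπ hq
  have hA : Measurable (mhAcceptProb Θ π q) :=
    (hm.stronglyMeasurable.integral_prod_right' (ν := volume.restrict Θ)).measurable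
  refine Measure.measurable_of_measurable_coe _ fun B hB => ?_
  simp only [mhKernel, Measure.add_apply, Measure.smul_apply, smul_eq_mul,
    withDensity_apply _ hB, Measure.dirac_apply' _ hB]
  refine Measurable.add ?_ ?_
  · exact hm.ennreal_ofReal.lintegral_prod_right'
  · exact (measurable_const.sub hA).ennreal_ofReal.mul (measurable_one.indicator hB)

/-- Measurability matters here: `Measure.bind` along a non-measurable family is the junk value
`0`. -/
lemma measurable_kernelIter {E : Type*} [MeasurableSpace E] {P : E → Measure E}
    (hP : Measurable P) (t : ℕ) : Measurable (kernelIter P t) := by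
  induction t with
  | zero => exact Measure.measurable_dirac
  | succ t ih => exact (Measure.measurable_bind' ih).comp hP

/-- The chain started at `θ` has rejected all of its first `t` proposals with probability
`(1 - A(θ))^t`. -/
lemma pow_le_kernelIter_singleton {d : ℕ} {Θ : Set (Fin d → ℝ)}
    {π : (Fin d → ℝ) → ℝ} {q : (Fin d → ℝ) → (Fin d → ℝ) → ℝ}
    (hπ : Measurable π) (hq : Measurable (Function.uncurry q)) (θ : Fin d → ℝ) (t : ℕ) :
    ENNReal.ofReal (1 - mhAcceptProb Θ π q θ) ^ t ≤ kernelIter (mhKernel Θ π q) t θ {θ} := by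
  induction t with
  | zero => simp [kernelIter]
  | succ t ih =>
    have hk := measurable_kernelIter (measurable_mhKernel (Θ := Θ) hπ hq) t
    rw [kernelIter, Measure.bind_apply (measurableSet_singleton θ) hk.aemeasurable]
    conv_rhs => rw [mhKernel]
    rw [lintegral_add_measure, lintegral_smul_measure, lintegral_dirac, pow_succ', smul_eq_mul]
    exact (mul_le_mul_right ih _).trans le_add_self

/-- An atom of mass `m` at `θ` in the first marginal must be transported to a second marginal `ν`;
at most `ν (ball θ r)` of it can be moved by less than `r`. -/
lemma le_wassersteinDist_of_atom {d : ℕ} {N : (Fin d → ℝ) → ℝ} {c : ℝ} (hc : 0 < c)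
    (hcN : ∀ x, c * ‖x‖ ≤ N x) (μ ν : Measure (Fin d → ℝ)) (θ : Fin d → ℝ) (r : ℝ) :
    ENNReal.ofReal (c * r) * (μ {θ} - ν (Metric.ball θ r)) ≤
      wassersteinDist (fun x y => N (x - y)) μ ν := by
  refine le_iInf₂ fun ξ hξ => ?_
  obtain ⟨rfl, rfl⟩ := hξ
  rw [Measure.map_apply measurable_fst (measurableSet_singleton θ),
    Measure.map_apply measurable_snd Metric.isOpen_ball.measurableSet]
  set S : Set ((Fin d → ℝ) × (Fin d → ℝ)) :=
    {p | ENNReal.ofReal (c * r) ≤ ENNReal.ofReal (c * ‖p.1 - p.2‖)} with hS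
  have hsub : (Prod.fst ⁻¹' {θ} : Set ((Fin d → ℝ) × (Fin d → ℝ))) ⊆
      S ∪ Prod.snd ⁻¹' Metric.ball θ r := by
    rintro ⟨x, y⟩ hx
    obtain rfl : x = θ := hx
    rcases lt_or_ge ‖x - y‖ r with h | h
    · right
      simpa [dist_eq_norm, norm_sub_rev] using h
    · left
      exact ENNReal.ofReal_le_ofReal (mul_le_mul_of_nonneg_left h hc.le)
  have hle : ξ (Prod.fst ⁻¹' {θ}) - ξ (Prod.snd ⁻¹' Metric.ball θ r) ≤ ξ S :=
    tsub_le_iff_right.2 ((measure_mono hsub).trans (measure_union_le _ _))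
  calc _ ≤ ENNReal.ofReal (c * r) * ξ S := by gcongr
    _ ≤ ∫⁻ p, ENNReal.ofReal (c * ‖p.1 - p.2‖) ∂ξ :=
        mul_meas_ge_le_lintegral
          (measurable_const.mul (measurable_fst.sub measurable_snd).norm).ennreal_ofReal _
    _ ≤ _ := lintegral_mono fun p => ENNReal.ofReal_le_ofReal (hcN _)

lemma withDensity_ball_le {d : ℕ} {Θ : Set (Fin d → ℝ)} {π : (Fin d → ℝ) → ℝ} {M : ℝ}
    (hM : 0 < M) (hπM : ∀ θ, π θ ≤ M) (θ : Fin d → ℝ) {r : ℝ} (hr : 0 < r) :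
    ((volume.restrict Θ).withDensity fun θ => ENNReal.ofReal (π θ)) (Metric.ball θ r) ≤
      ENNReal.ofReal (M * (2 * r) ^ d) := by
  rw [withDensity_apply _ Metric.isOpen_ball.measurableSet]
  calc _ ≤ ∫⁻ _ in Metric.ball θ r, ENNReal.ofReal M ∂(volume.restrict Θ) :=
        lintegral_mono fun x => ENNReal.ofReal_le_ofReal (hπM x)
    _ = ENNReal.ofReal M * (volume.restrict Θ) (Metric.ball θ r) := by
        rw [setLIntegral_const]
    _ ≤ ENNReal.ofReal M * volume (Metric.ball θ r) := by
        gcongr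
        exact Measure.restrict_le_self
    _ = _ := by
        rw [Real.volume_pi_ball θ hr, Fintype.card_fin, ← ENNReal.ofReal_mul hM.le]

/-- Proposition, necessary condition for Wasserstein geometric ergodicity.
If the target density satisfies `π ≤ M` and `inf_{θ ∈ Θ} A(θ) = 0`, then the
Metropolis–Hastings kernel is not Wasserstein geometrically ergodic with respect to the
metric induced by any norm on `ℝ^d`. -/
theorem mh_not_wasserstein_geometrically_ergodic
    {d : ℕ} (hd : 0 < d)
    (Θ : Set (Fin d → ℝ)) (hΘne : Θ.Nonempty) (hΘcl : IsClosed Θ)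
    (π : (Fin d → ℝ) → ℝ) (q : (Fin d → ℝ) → (Fin d → ℝ) → ℝ)
    (hπmeas : Measurable π) (hπ0 : ∀ θ, 0 ≤ π θ)
    (hqmeas : Measurable (Function.uncurry q)) (hq0 : ∀ θ θ', 0 ≤ q θ θ')
    (hqpos : ∀ θ' ∈ Θ, 0 < π θ' → ∀ θ ∈ Θ, 0 < q θ θ')
    -- `Π` is a probability measure on `Θ` with Lebesgue density `π`
    (Pi : Measure (Fin d → ℝ)) [IsProbabilityMeasure Pi]
    (hPi : Pi = (volume.restrict Θ).withDensity fun θ => ENNReal.ofReal (π θ))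
    -- each proposal `Q(θ, ·)` is a probability measure on `Θ` with density `q(θ, ·)`,
    -- different from `Π`
    (hQprob : ∀ θ ∈ Θ, IsProbabilityMeasure
      ((volume.restrict Θ).withDensity fun θ' => ENNReal.ofReal (q θ θ')))
    (hQnePi : ∀ θ ∈ Θ,
      ((volume.restrict Θ).withDensity fun θ' => ENNReal.ofReal (q θ θ')) ≠ Pi)
    -- the target density is bounded: `π ≤ M`
    (M : ℝ) (hM : 0 < M) (hπM : ∀ θ, π θ ≤ M)
    -- `inf_{θ ∈ Θ} A(θ) = 0`
    (hinf : (⨅ θ : Θ, mhAcceptProb Θ π q (θ : Fin d → ℝ)) = 0)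
    -- `N` is an arbitrary norm on `ℝ^d`
    (N : (Fin d → ℝ) → ℝ)
    (hNadd : ∀ x y, N (x + y) ≤ N x + N y)
    (hNsmul : ∀ (c : ℝ) x, N (c • x) = |c| * N x)
    (hNzero : ∀ x, N x = 0 ↔ x = 0) :
    -- `P` is not Wasserstein geometrically ergodic for the metric induced by `N`
    ¬ ∃ ε : ℝ, ε ∈ Set.Ioo (0 : ℝ) 1 ∧ ∀ θ ∈ Θ, ∃ Mθ : ℝ, 0 < Mθ ∧
        ∀ t : ℕ, 1 ≤ t →
          wassersteinDist (fun x y => N (x - y)) (kernelIter (mhKernel Θ π q) t θ) Pi ≤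
            ENNReal.ofReal (Mθ * ε ^ t) := by
  rintro ⟨ε, ⟨hε0, hε1⟩, hW⟩
  obtain ⟨c, hc, hcN⟩ := exists_pos_mul_norm_le N hNadd hNsmul hNzero
  have : Nonempty Θ := hΘne.to_subtype
  obtain ⟨⟨θ, hθ⟩, hAlt⟩ := exists_lt_of_ciInf_lt
    (show (⨅ θ : Θ, mhAcceptProb Θ π q (θ : Fin d → ℝ)) < (1 - ε) / 2 by rw [hinf]; linarith)
  have hA0 : 0 ≤ mhAcceptProb Θ π q θ :=
    integral_nonneg fun θ' => mul_nonneg (mhAccept_nonneg hπ0 hq0 θ θ') (hq0 θ θ')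
  obtain ⟨Mθ, hMθ, hW⟩ := hW θ hθ
  have hiter := pow_le_kernelIter_singleton (Θ := Θ) hπmeas hqmeas θ
  set a : ℝ := 1 - mhAcceptProb Θ π q θ with ha
  have ha0 : 0 < a := by simp only at hAlt; linarith
  have ha1 : a ≤ 1 := by linarith
  have hεa : ε < a ^ 2 := by simp only at hAlt; nlinarith
  -- With `r = κ m`, `m ≤ 1`, both `2κ ≤ 1` and `2κM ≤ 1/2` hold, so `M (2r)^d ≤ m / 2`.
  set κ : ℝ := 1 / (2 + 4 * M) with hκ
  have hκ0 : 0 < κ := by positivity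
  have hκ1 : κ * (2 + 4 * M) = 1 := by rw [hκ]; field_simp
  have hκM : 0 < κ * M := mul_pos hκ0 hM
  have key : ∀ t : ℕ, 1 ≤ t → c * κ / 2 * (a ^ 2) ^ t ≤ Mθ * ε ^ t := fun t ht => by
    set m : ℝ := a ^ t with hm
    have hm0 : 0 < m := pow_pos ha0 t
    have hm1 : m ≤ 1 := pow_le_one₀ ha0.le ha1
    have hball : M * (2 * (κ * m)) ^ d ≤ m / 2 := by
      have h1 : 2 * (κ * m) ≤ 1 := by nlinarith
      have h2 : (2 * (κ * m)) ^ d ≤ 2 * (κ * m) :=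
        pow_le_of_le_one (by positivity) h1 hd.ne'
      calc M * (2 * (κ * m)) ^ d ≤ M * (2 * (κ * m)) := by gcongr
        _ = (2 * (κ * M)) * m := by ring
        _ ≤ 1 / 2 * m := by
            refine mul_le_mul_of_nonneg_right ?_ hm0.le
            nlinarith
        _ = m / 2 := by ring
    have hPiball : Pi (Metric.ball θ (κ * m)) ≤ ENNReal.ofReal (m / 2) := by
      rw [hPi]
      exact (withDensity_ball_le hM hπM θ (mul_pos hκ0 hm0)).trans
        (ENNReal.ofReal_le_ofReal hball)
    have hatom : ENNReal.ofReal m ≤ kernelIter (mhKernel Θ π q) t θ {θ} := by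
      rw [hm, ENNReal.ofReal_pow ha0.le]
      exact hiter t
    have hlow : ENNReal.ofReal (c * (κ * m) * (m / 2)) ≤ ENNReal.ofReal (Mθ * ε ^ t) := by
      refine le_trans ?_ ((le_wassersteinDist_of_atom hc hcN _ Pi θ (κ * m)).trans (hW t ht))
      rw [ENNReal.ofReal_mul (by positivity)]
      gcongr
      calc ENNReal.ofReal (m / 2) = ENNReal.ofReal m - ENNReal.ofReal (m / 2) := by
            rw [← ENNReal.ofReal_sub _ (by positivity)]
            congr 1
            linarith
        _ ≤ _ := tsub_le_tsub hatom hPiball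
    have hreal := (ENNReal.ofReal_le_ofReal_iff (by positivity)).1 hlow
    calc c * κ / 2 * (a ^ 2) ^ t = c * (κ * m) * (m / 2) := by
          rw [← pow_mul, mul_comm 2 t, pow_mul, ← hm]
          ring
      _ ≤ _ := hreal
  -- The ratio `(a ^ 2 / ε) ^ t` is unbounded in `t`.
  have hx : 1 < a ^ 2 / ε := (one_lt_div hε0).2 hεa
  obtain ⟨n, hn⟩ := pow_unbounded_of_one_lt (Mθ / (c * κ / 2)) hx
  have hn' : Mθ / (c * κ / 2) < (a ^ 2 / ε) ^ (n + 1) :=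
    hn.trans_le (pow_le_pow_right₀ hx.le n.le_succ)
  rw [div_pow, div_lt_div_iff₀ (by positivity) (by positivity)] at hn'
  have := key (n + 1) (by lia)
  linarith
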